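/- Let R be a commutative ring. The set PicS(R) of isomorphism classes of finitely generated projective R-modules E with rank_R(E) ≤ 1 (i.e. E_p = 0 or E_p ≅ R_p for every prime p), with operation [E][F] = [E⊗_R F], is a commutative inverse monoid with zero, in which the semigroup inverse of [E] is [E*] where E* = Hom_R(E, R). -/

import Mathlib

open scoped TensorProduct
set_option synthInstance.maxHeartbeats 1000000
set_option maxHeartbeats 1000000

variable {R : Type u} [CommRing R]

/-- `E` has rank at most one: for every prime `p`, `E_p = 0` or `E_p ≅ R_p`. -/
def RankLeOne (R : Type u) [CommRing R] (E : Type u) [AddCommGroup E] [Module R E] : Prop :=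
  ∀ (p : Ideal R) [p.IsPrime],
    Subsingleton (LocalizedModule p.primeCompl E) ∨
    Nonempty ((LocalizedModule p.primeCompl E) ≃ₗ[Localization p.primeCompl]
      (Localization p.primeCompl))

/-- `[E] ∈ PicS(R)`: `E` is a finitely generated projective `R`-module of rank `≤ 1`. -/
def MemPicS (R : Type u) [CommRing R] (E : Type u) [AddCommGroup E] [Module R E] : Prop :=
  Module.Finite R E ∧ Module.Projective R E ∧ RankLeOne R E

/-
A finitely generated projective module has rank at most one exactly when its stalk rank function `r`
takes values in `{0, 1}`. The contraction `x ⊗ f ⊗ y ↦ f x • y` from `E ⊗ E* ⊗ E` to `E` is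
surjective because `E` is projective, and its source and target have ranks `r ^ 3` and `r`, which
agree since `r ≤ 1`; a surjection between finitely generated projective modules of equal rank is
bijective. Uniqueness of the inverse is the usual commutative semigroup computation
`x = x e x = x (e y e) x = x y e`, symmetric in the two inverses `x` and `y` of `e`.
-/

section Contraction

variable (A M N : Type*) [CommSemiring A] [AddCommMonoid M] [Module A M]
  [AddCommMonoid N] [Module A N]

/-- The contraction `M ⊗ M* ⊗ N → N`, `m ⊗ f ⊗ n ↦ f m • n`. For `M = N` of rank at
most one it realizes `M*` as a semigroup inverse of `M`. -/
noncomputable def contractRightSMul : M ⊗[A] Module.Dual A M ⊗[A] N →ₗ[A] N :=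
  TensorProduct.lid A N ∘ₗ (contractRight A M).rTensor N

@[simp]
theorem contractRightSMul_tmul (m : M) (f : Module.Dual A M) (n : N) :
    contractRightSMul A M N (m ⊗ₜ f ⊗ₜ n) = f m • n := by
  simp [contractRightSMul]

theorem contractRightSMul_surjective [Module.Projective A M] :
    Function.Surjective (contractRightSMul A M M) := by
  intro x
  obtain ⟨s, hs⟩ := Module.Projective.out (R := A) (P := M)
  -- The coordinates of a section `s` of `(M →₀ A) → M` play the role of a dual basis.
  refine ⟨∑ m ∈ (s x).support, x ⊗ₜ (Finsupp.lapply m ∘ₗ s) ⊗ₜ m, ?_⟩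
  calc contractRightSMul A M M (∑ m ∈ (s x).support, x ⊗ₜ (Finsupp.lapply m ∘ₗ s) ⊗ₜ m)
      = ∑ m ∈ (s x).support, s x m • m := by simp
    _ = Finsupp.linearCombination A id (s x) := rfl
    _ = x := hs x

end Contraction

section SemigroupInverse

variable {A E X Y : Type*} [CommSemiring A] [AddCommMonoid E] [Module A E]
  [AddCommMonoid X] [Module A X] [AddCommMonoid Y] [Module A Y]

variable (A E X) in
/-- `[X]` is a semigroup inverse of `[E]` in the commutative monoid of isomorphism classes of
`A`-modules under the tensor product. -/
def IsSemigroupInverse : Prop :=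
  Nonempty (E ⊗[A] X ⊗[A] E ≃ₗ[A] E) ∧ Nonempty (X ⊗[A] E ⊗[A] X ≃ₗ[A] X)

theorem nonempty_linearEquiv_tensor_tensor (hE : Nonempty (E ⊗[A] Y ⊗[A] E ≃ₗ[A] E))
    (hX : Nonempty (X ⊗[A] E ⊗[A] X ≃ₗ[A] X)) : Nonempty (X ≃ₗ[A] X ⊗[A] (Y ⊗[A] E)) := by
  obtain ⟨e⟩ := hE
  obtain ⟨x⟩ := hX
  let expand : X ⊗[A] E ⊗[A] X ≃ₗ[A] X ⊗[A] (E ⊗[A] (Y ⊗[A] E)) ⊗[A] X :=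
    ((e.symm ≪≫ₗ TensorProduct.assoc A E Y E).lTensor X).rTensor X
  let regroup : X ⊗[A] (E ⊗[A] (Y ⊗[A] E)) ⊗[A] X ≃ₗ[A] X ⊗[A] E ⊗[A] X ⊗[A] (Y ⊗[A] E) :=
    (TensorProduct.assoc A X E (Y ⊗[A] E)).symm.rTensor X ≪≫ₗ
      TensorProduct.rightComm A (X ⊗[A] E) (Y ⊗[A] E) X
  exact ⟨x.symm ≪≫ₗ expand ≪≫ₗ regroup ≪≫ₗ x.rTensor (Y ⊗[A] E)⟩

theorem IsSemigroupInverse.nonempty_linearEquiv (hX : IsSemigroupInverse A E X)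
    (hY : IsSemigroupInverse A E Y) : Nonempty (X ≃ₗ[A] Y) := by
  obtain ⟨x⟩ := nonempty_linearEquiv_tensor_tensor hY.1 hX.2
  obtain ⟨y⟩ := nonempty_linearEquiv_tensor_tensor hX.1 hY.2
  exact ⟨x ≪≫ₗ TensorProduct.leftComm A X Y E ≪≫ₗ y.symm⟩

end SemigroupInverse

section RankAtStalk

open Module

attribute [local instance] Module.free_of_flat_of_isLocalRing

theorem rankAtStalk_linearMap (M N : Type*) [AddCommGroup M] [Module R M] [AddCommGroup N]
    [Module R N] [FinitePresentation R M] [Flat R M] [Module.Finite R N] [Flat R N] :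
    rankAtStalk (R := R) (M →ₗ[R] N) = rankAtStalk M * rankAtStalk (R := R) N := by
  ext p
  let localizeHom := (FinitePresentation.linearEquivMapExtendScalars (M := M) (N := N)
    p.asIdeal.primeCompl).extendScalarsOfIsLocalization p.asIdeal.primeCompl
      (Localization.AtPrime p.asIdeal)
  exact localizeHom.finrank_eq.trans (finrank_linearMap ..)

theorem rankAtStalk_dual (M : Type*) [AddCommGroup M] [Module R M] [FinitePresentation R M]
    [Flat R M] : rankAtStalk (R := R) (Dual R M) = rankAtStalk M := by
  ext p
  have := p.nontrivial
  simp [Dual, rankAtStalk_linearMap]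

theorem contractRightSMul_bijective (M : Type*) [AddCommGroup M] [Module R M] [Module.Finite R M]
    [Projective R M] (hM : rankAtStalk (R := R) M ≤ 1) :
    Function.Bijective (contractRightSMul R M M) := by
  have := finitePresentation_of_projective R M
  refine bijective_of_surjective_of_rankAtStalk_eq (contractRightSMul_surjective R M) fun m _ ↦ ?_
  rw [rankAtStalk_tensorProduct, rankAtStalk_tensorProduct, rankAtStalk_dual]
  obtain h | h := Nat.le_one_iff_eq_zero_or_eq_one.mp (hM ⟨m, inferInstance⟩) <;> simp [h]

theorem rankLeOne_iff_rankAtStalk_le_one (E : Type u) [AddCommGroup E] [Module R E]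
    [Module.Finite R E] [Flat R E] : RankLeOne R E ↔ rankAtStalk (R := R) E ≤ 1 := by
  constructor
  · intro h p
    obtain _ | ⟨⟨e⟩⟩ := h p.asIdeal
    · exact finrank_zero_of_subsingleton.trans_le zero_le_one
    · exact (e.finrank_eq.trans (finrank_self _)).le
  · intro h p _
    obtain h₀ | h₁ := Nat.le_one_iff_eq_zero_or_eq_one.mp (h ⟨p, inferInstance⟩)
    · exact .inl ((finrank_eq_zero_iff_of_free (Localization.AtPrime p) _).mp h₀)
    · exact .inr ((nonempty_linearEquiv_of_finrank_eq_one h₁).map .symm)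

end RankAtStalk

section MemPicS

variable {E F : Type u} [AddCommGroup E] [Module R E] [AddCommGroup F] [Module R F]

theorem memPicS_iff_rankAtStalk_le_one :
    MemPicS R E ↔
      Module.Finite R E ∧ Module.Projective R E ∧ Module.rankAtStalk (R := R) E ≤ 1 :=
  and_congr_right fun _ ↦ and_congr_right fun _ ↦ rankLeOne_iff_rankAtStalk_le_one E

theorem memPicS_self : MemPicS R R := by
  refine memPicS_iff_rankAtStalk_le_one.mpr ⟨inferInstance, inferInstance, fun p ↦ ?_⟩
  have := p.nontrivial
  simp

theorem memPicS_of_subsingleton [Subsingleton E] : MemPicS R E :=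
  ⟨inferInstance, inferInstance, fun _ _ ↦ .inl inferInstance⟩

theorem MemPicS.tensorProduct (hE : MemPicS R E) (hF : MemPicS R F) : MemPicS R (E ⊗[R] F) := by
  rw [memPicS_iff_rankAtStalk_le_one] at *
  obtain ⟨_, _, rank_E⟩ := hE
  obtain ⟨_, _, rank_F⟩ := hF
  refine ⟨inferInstance, inferInstance, ?_⟩
  rw [Module.rankAtStalk_tensorProduct]
  exact fun p ↦ Nat.mul_le_mul (rank_E p) (rank_F p)

theorem MemPicS.dual (hE : MemPicS R E) : MemPicS R (Module.Dual R E) := by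
  rw [memPicS_iff_rankAtStalk_le_one] at *
  obtain ⟨_, _, rank_E⟩ := hE
  have := Module.finitePresentation_of_projective R E
  exact ⟨inferInstance, inferInstance, (rankAtStalk_dual E).trans_le rank_E⟩

theorem MemPicS.nonempty_tensor_dual_tensor_linearEquiv (hE : MemPicS R E) :
    Nonempty (E ⊗[R] Module.Dual R E ⊗[R] E ≃ₗ[R] E) := by
  obtain ⟨_, _, rank_E⟩ := memPicS_iff_rankAtStalk_le_one.mp hE
  exact ⟨.ofBijective _ (contractRightSMul_bijective E rank_E)⟩

theorem MemPicS.isSemigroupInverse_dual (hE : MemPicS R E) :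
    IsSemigroupInverse R E (Module.Dual R E) := by
  have := hE.1
  have := hE.2.1
  obtain ⟨dualContraction⟩ := hE.dual.nonempty_tensor_dual_tensor_linearEquiv
  exact ⟨hE.nonempty_tensor_dual_tensor_linearEquiv,
    ⟨((Module.evalEquiv R E).lTensor _).rTensor _ ≪≫ₗ dualContraction⟩⟩

end MemPicS

/-- `PicS(R)`, the set of isomorphism classes of finitely generated
projective `R`-modules of rank `≤ 1` with `[E][F] = [E ⊗ F]`, is a commutative inverse
monoid with zero, the (semigroup) inverse of `[E]` being `[E*] = [Hom_R(E,R)]`: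
it is closed under tensor products, the operation is commutative, `[R]` is an identity,
the class of the zero module is a zero element, `E*` satisfies the two inverse equations,
and it is the unique such element (up to isomorphism). -/
theorem stmt10 (E F : Type u) [AddCommGroup E] [Module R E] [AddCommGroup F] [Module R F]
    (hE : MemPicS R E) (hF : MemPicS R F) :
    -- closure under the product
    MemPicS R (E ⊗[R] F) ∧
    -- commutativity
    Nonempty ((E ⊗[R] F) ≃ₗ[R] (F ⊗[R] E)) ∧
    -- `[R]` is the identity
    (MemPicS R R ∧ Nonempty ((R ⊗[R] E) ≃ₗ[R] E)) ∧
    -- the class of the zero module is a zero element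
    (∀ (Z : Type u) [AddCommGroup Z] [Module R Z], Subsingleton Z →
      (MemPicS R Z ∧ Nonempty ((Z ⊗[R] E) ≃ₗ[R] Z))) ∧
    -- the dual is a semigroup inverse …
    (MemPicS R (Module.Dual R E) ∧
      Nonempty ((E ⊗[R] (Module.Dual R E) ⊗[R] E) ≃ₗ[R] E) ∧
      Nonempty (((Module.Dual R E) ⊗[R] E ⊗[R] (Module.Dual R E)) ≃ₗ[R]
        (Module.Dual R E))) ∧
    -- … and it is the unique one, so `PicS(R)` is an inverse monoid
    (∀ (X : Type u) [AddCommGroup X] [Module R X], MemPicS R X →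
      Nonempty ((E ⊗[R] X ⊗[R] E) ≃ₗ[R] E) →
      Nonempty ((X ⊗[R] E ⊗[R] X) ≃ₗ[R] X) →
      Nonempty (X ≃ₗ[R] Module.Dual R E)) := by
  refine ⟨hE.tensorProduct hF, ⟨TensorProduct.comm R E F⟩,
    ⟨memPicS_self, ⟨TensorProduct.lid R E⟩⟩, ?zero, ⟨hE.dual, hE.isSemigroupInverse_dual⟩, ?unique⟩
  case zero =>
    intro Z _ _ _
    exact ⟨memPicS_of_subsingleton, ⟨0⟩⟩
  case unique =>
    intro X _ _ _ hEXE hXEX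
    exact IsSemigroupInverse.nonempty_linearEquiv ⟨hEXE, hXEX⟩ hE.isSemigroupInverse_dual
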